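/- Let [a,b] ⊂ ℝ be a compact interval and f₀ a probability density on [a,b] with f₀ > 0 and TV(log f₀) < ∞. Let x₁,...,xₙ ∈ [a,b], let λ ≥ 0, and let f̂ be a probability density on [a,b] with f̂ > 0 and TV(log f̂) < ∞ satisfying the optimality comparison −(1/n)Σᵢ log f̂(xᵢ) + λ·TV(log f̂) ≤ −(1/n)Σᵢ log f₀(xᵢ) + λ·TV(log f₀). Then, writing ĥ² = h²(f̂, f₀), Î = TV(log f̂), I₀ = TV(log f₀), and p_{f̂} = (1/2) log((f̂ + f₀)/(2f₀)), one has ĥ² ≤ 16 (P_n − P)(p_{f̂}) + 4λ(I₀ − Î), where P_n(g) = (1/n)Σᵢ g(xᵢ) and P(g) = ∫ₐᵇ g(x) f₀(x) dx. -/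

import Mathlib

open MeasureTheory Set

/-- The total variation of `g` on `[a,b]`, as a real number. -/
noncomputable def TVr (a b : ℝ) (g : ℝ → ℝ) : ℝ :=
  (eVariationOn g (Set.Icc a b)).toReal

/-- The squared Hellinger distance `h²(f,g) = (1/2)∫ₐᵇ (√f - √g)²`. -/
noncomputable def hellSq (a b : ℝ) (f g : ℝ → ℝ) : ℝ :=
  (1 / 2) * ∫ t in Set.Icc a b, (Real.sqrt (f t) - Real.sqrt (g t)) ^ 2

theorem aux_pt (f g : ℝ) (hf : 0 < f) (hg : 0 < g) :
    (1 / 2) * (Real.sqrt f - Real.sqrt g) ^ 2 ≤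
      -16 * (((1 / 2) * Real.log ((f + g) / (2 * g))) * g) + 4 * (f - g) := by
  obtain ⟨s, hs, rfl⟩ : ∃ s, 0 < s ∧ f = s ^ 2 :=
    ⟨Real.sqrt f, Real.sqrt_pos.2 hf, (Real.sq_sqrt hf.le).symm⟩
  obtain ⟨t, ht, rfl⟩ : ∃ t, 0 < t ∧ g = t ^ 2 :=
    ⟨Real.sqrt g, Real.sqrt_pos.2 hg, (Real.sq_sqrt hg.le).symm⟩
  rw [Real.sqrt_sq hs.le, Real.sqrt_sq ht.le]
  obtain ⟨r, hr, hr2⟩ : ∃ r, 0 < r ∧ r ^ 2 = (s ^ 2 + t ^ 2) / 2 :=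
    ⟨Real.sqrt ((s ^ 2 + t ^ 2) / 2), Real.sqrt_pos.2 (by positivity),
      Real.sq_sqrt (by positivity)⟩
  have e : (s ^ 2 + t ^ 2) / (2 * t ^ 2) = (r / t) ^ 2 := by
    rw [div_pow, hr2]; field_simp
  rw [e, Real.log_pow]
  have hl := Real.log_le_sub_one_of_pos (div_pos hr ht)
  have h2 : Real.log (r / t) * t ^ 2 ≤ r * t - t ^ 2 := by
    calc _ ≤ (r / t - 1) * t ^ 2 := by gcongr
      _ = _ := by field_simp
  have hrs : r ≤ s + t := by
    apply le_of_sq_le_sq _ (by positivity)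
    nlinarith [mul_pos hs ht, sq_nonneg s, sq_nonneg t]
  have key : (s - t) ^ 2 ≤ 16 * (r - t) ^ 2 := by
    have h3 : (s - t) * (s + t) = 2 * ((r - t) * (r + t)) := by nlinarith
    have h4 : (s - t) ^ 2 * (s + t) ^ 2 = 4 * (r - t) ^ 2 * (r + t) ^ 2 := by
      rw [← mul_pow, h3]; ring
    have h5 : (r + t) ^ 2 ≤ (2 * (s + t)) ^ 2 := by
      apply pow_le_pow_left₀ (by positivity); linarith
    have h6 : (s - t) ^ 2 * (s + t) ^ 2 ≤ 16 * (r - t) ^ 2 * (s + t) ^ 2 := by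
      rw [h4]
      nlinarith [mul_le_mul_of_nonneg_left h5 (sq_nonneg (r - t))]
    exact le_of_mul_le_mul_right h6 (by positivity)
  push_cast
  nlinarith

theorem aux_bd (f g : ℝ) (hf : 0 < f) (hg : 0 < g) :
    ‖((1 / 2) * Real.log ((f + g) / (2 * g))) * g‖ ≤ f + g := by
  have hu : 0 < (f + g) / (2 * g) := by positivity
  have h1 := Real.log_le_sub_one_of_pos hu
  have h2 := Real.log_le_sub_one_of_pos (inv_pos.2 hu)
  rw [Real.log_inv] at h2
  have h3 : Real.log ((f + g) / (2 * g)) * g ≤ (f - g) / 2 := by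
    calc _ ≤ ((f + g) / (2 * g) - 1) * g := by gcongr
      _ = _ := by field_simp; ring
  have h4 : ((f + g) / (2 * g))⁻¹ ≤ 2 := by
    rw [inv_div, div_le_iff₀ (by positivity)]; linarith
  have h5 : -Real.log ((f + g) / (2 * g)) * g ≤ 1 * g := by
    gcongr; linarith
  rw [Real.norm_eq_abs, abs_le]
  constructor <;> linarith

theorem aux_conc (f g : ℝ) (hf : 0 < f) (hg : 0 < g) :
    (Real.log f - Real.log g) / 4 ≤ (1 / 2) * Real.log ((f + g) / (2 * g)) := by
  have hu : 0 < (f + g) / (2 * g) := by positivity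
  have h : f / g ≤ ((f + g) / (2 * g)) ^ 2 := by
    rw [div_pow, div_le_div_iff₀ hg (by positivity)]
    nlinarith [mul_nonneg hg.le (sq_nonneg (f - g))]
  have h' := Real.log_le_log (by positivity) h
  rw [Real.log_pow, Real.log_div hf.ne' hg.ne'] at h'
  push_cast at h'
  linarith

/-- the basic inequality.  If `f̂` satisfies the optimality
comparison against `f₀` for the penalized log-likelihood, then
`h²(f̂,f₀) ≤ 16 (Pₙ - P)(p_{f̂}) + 4λ(I₀ - Î)` where
`p_{f̂} = (1/2) log((f̂ + f₀)/(2f₀))`, `Î = TV(log f̂)`, `I₀ = TV(log f₀)`,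
`Pₙ(g) = (1/n)Σᵢ g(xᵢ)` and `P(g) = ∫ₐᵇ g f₀`. -/
theorem stmt_6 (a b : ℝ) (hab : a < b) (n : ℕ) (hn : 1 ≤ n)
    (f₀ fhat : ℝ → ℝ)
    (hf₀pos : ∀ t ∈ Icc a b, 0 < f₀ t)
    (hf₀int : IntegrableOn f₀ (Icc a b))
    (hf₀one : (∫ t in Icc a b, f₀ t) = 1)
    (hf₀TV : eVariationOn (fun t => Real.log (f₀ t)) (Icc a b) ≠ ⊤)
    (hfpos : ∀ t ∈ Icc a b, 0 < fhat t)
    (hfint : IntegrableOn fhat (Icc a b))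
    (hfone : (∫ t in Icc a b, fhat t) = 1)
    (hfTV : eVariationOn (fun t => Real.log (fhat t)) (Icc a b) ≠ ⊤)
    (x : Fin n → ℝ) (hx : ∀ i, x i ∈ Icc a b)
    (lam : ℝ) (hlam : 0 ≤ lam)
    (hopt :
      -(1 / (n : ℝ)) * ∑ i, Real.log (fhat (x i))
        + lam * TVr a b (fun t => Real.log (fhat t))
      ≤ -(1 / (n : ℝ)) * ∑ i, Real.log (f₀ (x i))
        + lam * TVr a b (fun t => Real.log (f₀ t))) :
    hellSq a b fhat f₀ ≤
      16 * ((1 / (n : ℝ)) *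
          (∑ i, (1 / 2) * Real.log ((fhat (x i) + f₀ (x i)) / (2 * f₀ (x i))))
        - ∫ t in Icc a b,
            ((1 / 2) * Real.log ((fhat t + f₀ t) / (2 * f₀ t))) * f₀ t)
      + 4 * lam * (TVr a b (fun t => Real.log (f₀ t))
          - TVr a b (fun t => Real.log (fhat t))) := by
  have hms : MeasurableSet (Icc a b) := measurableSet_Icc
  have hm0 := hf₀int.aemeasurable
  have hm := hfint.aemeasurable
  have hae : ∀ᵐ t ∂(volume.restrict (Icc a b)), t ∈ Icc a b := ae_restrict_mem hms
  have hI : Integrable (fun t => ((1 / 2) * Real.log ((fhat t + f₀ t) / (2 * f₀ t))) * f₀ t)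
      (volume.restrict (Icc a b)) := by
    refine Integrable.mono' (hfint.add hf₀int) ?_ ?_
    · exact ((((hm.add hm0).div (hm0.const_mul 2)).log.const_mul (1 / 2)).mul
        hm0).aestronglyMeasurable
    · filter_upwards [hae] with t ht
      exact aux_bd _ _ (hfpos t ht) (hf₀pos t ht)
  have hD : Integrable (fun t => 4 * (fhat t - f₀ t)) (volume.restrict (Icc a b)) :=
    (hfint.sub hf₀int).const_mul 4
  have hR : Integrable (fun t => -16 * (((1 / 2) * Real.log ((fhat t + f₀ t) / (2 * f₀ t))) * f₀ t)
      + 4 * (fhat t - f₀ t)) (volume.restrict (Icc a b)) :=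
    (hI.const_mul _).add ((hfint.sub hf₀int).const_mul 4)
  have h1 : hellSq a b fhat f₀ ≤ -16 * ∫ t in Icc a b,
            ((1 / 2) * Real.log ((fhat t + f₀ t) / (2 * f₀ t))) * f₀ t := by
    unfold hellSq
    rw [← integral_const_mul]
    calc _ ≤ ∫ t in Icc a b, (-16 * (((1 / 2) * Real.log ((fhat t + f₀ t) / (2 * f₀ t))) * f₀ t)
      + 4 * (fhat t - f₀ t)) := by
          refine integral_mono_of_nonneg (ae_of_all _ fun t => by positivity) hR ?_
          filter_upwards [hae] with t ht
          exact aux_pt _ _ (hfpos t ht) (hf₀pos t ht)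
      _ = _ := by
          rw [integral_add (hI.const_mul _) hD,
            integral_const_mul, integral_const_mul, integral_sub hfint hf₀int, hfone, hf₀one]
          ring
  have h2 : (1 / (n : ℝ)) * ((∑ i, Real.log (fhat (x i)) - ∑ i, Real.log (f₀ (x i))) / 4) ≤
      (1 / (n : ℝ)) *
          (∑ i, (1 / 2) * Real.log ((fhat (x i) + f₀ (x i)) / (2 * f₀ (x i)))) := by
    gcongr
    rw [← Finset.sum_sub_distrib, Finset.sum_div]
    exact Finset.sum_le_sum fun i _ => aux_conc _ _ (hfpos _ (hx i)) (hf₀pos _ (hx i))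
  linarith
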